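/- Let Ω ⊂ ℝ² be a bounded, open, connected set with Lipschitz boundary, let ((x_k,y_k))_{k∈I} be a finite family of pairs of points of cl(Ω) satisfying (P_f), let T be the associated functional on Lip₀(Ω), T(φ) := Σ_{k∈I}(φ(x_k) − φ(y_k)), and let {I_P, I_D}, τ be a minimizer of the energy E as in the structure lemma. Then there exists φ ∈ Lip₀(Ω) with ‖φ‖_∞ ≤ 1 and lip(φ) ≤ 2 such that T(φ) = E(I_P,I_D,τ); moreover φ(x_k) = 1 for every k ∈ I_P with x_k ∈ Ω, φ(y_j) = −1 for every j ∈ I ∖ τ(I_D) with y_j ∈ Ω, and φ(x_k) − φ(y_{τ(k)}) = 2|x_k − y_{τ(k)}| for every k ∈ I_D. In particular, min{ E(I_P,I_D,τ) : {I_P,I_D} a partition of I, τ : I_D → I injective } = max{ T(φ) : φ ∈ Lip₀(Ω), ‖φ‖_∞ ≤ 1, lip(φ) ≤ 2 }. -/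

import Mathlib

open MeasureTheory Metric Filter Set
open scoped ENNReal NNReal Topology Classical

noncomputable section

abbrev R2 := EuclideanSpace ℝ (Fin 2)

/-- `Ω ⊂ ℝ²` has Lipschitz boundary: near every boundary point, after a rigid motion,
`Ω` coincides with the open region strictly above the graph of a Lipschitz function. -/
def HasLipschitzBoundary (Ω : Set R2) : Prop :=
  ∀ p ∈ frontier Ω, ∃ r : ℝ, 0 < r ∧ ∃ (f : R2 ≃ᵢ R2) (γ : ℝ → ℝ) (L : ℝ≥0),
    LipschitzWith L γ ∧ ∀ x ∈ Metric.ball p r, (x ∈ Ω ↔ γ (f x 0) < f x 1)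

/-- `G` is the weak (distributional) gradient of `u` on `Ω`:
`∫_Ω u_i ∂_j φ = -∫_Ω G_{ij} φ` for all test functions `φ ∈ C_c^∞(Ω)`. -/
def IsWeakGradient (Ω : Set R2) (u : R2 → R2) (G : R2 → Matrix (Fin 2) (Fin 2) ℝ) : Prop :=
  ∀ φ : R2 → ℝ, ContDiff ℝ (⊤ : ℕ∞) φ → HasCompactSupport φ → tsupport φ ⊆ Ω →
    ∀ i j : Fin 2,
      (∫ x in Ω, u x i * fderiv ℝ φ x (EuclideanSpace.single j 1)) =
        - ∫ x in Ω, G x i j * φ x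

/-- `u ∈ W^{1,1}(Ω;ℝ²)` with weak gradient `G`. -/
def MemW11 (Ω : Set R2) (u : R2 → R2) (G : R2 → Matrix (Fin 2) (Fin 2) ℝ) : Prop :=
  IntegrableOn u Ω ∧ (∀ i j : Fin 2, IntegrableOn (fun x => G x i j) Ω) ∧
    IsWeakGradient Ω u G

/-- `|u| = 1` a.e. in `Ω`. -/
def SphereValued (Ω : Set R2) (u : R2 → R2) : Prop :=
  ∀ᵐ x ∂(volume.restrict Ω), ‖u x‖ = 1

/-- Frobenius norm of a `2×2` matrix. -/
def frob (M : Matrix (Fin 2) (Fin 2) ℝ) : ℝ :=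
  Real.sqrt (∑ i, ∑ j, (M i j) ^ 2)

/-- Jacobian matrix of a map `v : ℝ² → ℝ²`. -/
def jacobianMatrix (v : R2 → R2) (x : R2) : Matrix (Fin 2) (Fin 2) ℝ :=
  Matrix.of fun i j => fderiv ℝ v x (EuclideanSpace.single j 1) i

/-- Classical graph area `A(v,A) = ∫_A √(1 + |∇v|² + (Jv)²)` of a `C¹` map. -/
def classicalArea (A : Set R2) (v : R2 → R2) : ℝ≥0∞ :=
  ∫⁻ x in A, ENNReal.ofReal
    (Real.sqrt (1 + (∑ i, ∑ j, (jacobianMatrix v x i j) ^ 2) + (jacobianMatrix v x).det ^ 2))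

/-- `L¹`-relaxed area functional `𝒜(u,A)`. -/
def relaxedArea (u : R2 → R2) (A : Set R2) : ℝ≥0∞ :=
  sInf { a : ℝ≥0∞ | ∃ v : ℕ → R2 → R2,
    (∀ k, ContDiffOn ℝ 1 (v k) A) ∧
    (∀ k, IntegrableOn (fun x => v k x - u x) A) ∧
    Tendsto (fun k => ∫ x in A, ‖v k x - u x‖) atTop (nhds 0) ∧
    a = Filter.liminf (fun k => classicalArea A (v k)) atTop }

/-- `λ_u = (1/2)(u₁ ∇^⊥u₂ − u₂ ∇^⊥u₁)`, computed from the weak gradient `G`. -/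
def lambdaVec (u : R2 → R2) (G : R2 → Matrix (Fin 2) (Fin 2) ℝ) (x : R2) : Fin 2 → ℝ :=
  ![ (1 / 2) * (-(u x 0) * G x 1 1 + u x 1 * G x 0 1),
     (1 / 2) * (u x 0 * G x 1 0 - u x 1 * G x 0 0) ]

/-- Distributional Jacobian pairing `⟨Det(∇u), φ⟩ = ∫_Ω λ_u · ∇φ`. -/
def detPairing (Ω : Set R2) (u : R2 → R2) (G : R2 → Matrix (Fin 2) (Fin 2) ℝ)
    (φ : R2 → ℝ) : ℝ :=
  ∫ x in Ω, ∑ j, lambdaVec u G x j * fderiv ℝ φ x (EuclideanSpace.single j 1)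

/-- `φ ∈ Lip₀(Ω)`: Lipschitz on `cl(Ω)` and vanishing on `∂Ω`. -/
def MemLip0 (Ω : Set R2) (φ : R2 → ℝ) : Prop :=
  (∃ L : ℝ≥0, LipschitzOnWith L φ (closure Ω)) ∧ ∀ p ∈ frontier Ω, φ p = 0

/-- Admissible test functions for the flat norm: Lipschitz constant `≤ L` on `cl(Ω)`,
vanishing on `Z`, and bounded by `1` on `cl(Ω)`. -/
def FlatAdmissible (Ω Z : Set R2) (L : ℝ≥0) (φ : R2 → ℝ) : Prop :=
  LipschitzOnWith L φ (closure Ω) ∧ (∀ p ∈ Z, φ p = 0) ∧ ∀ p ∈ closure Ω, |φ p| ≤ 1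

/-- Flat norm of a functional `F`, with vanishing condition on the set `Z`. -/
def flatNormOn (Ω Z : Set R2) (L : ℝ≥0) (F : (R2 → ℝ) → ℝ) : ℝ≥0∞ :=
  ⨆ φ ∈ {φ : R2 → ℝ | FlatAdmissible Ω Z L φ}, ENNReal.ofReal (F φ)

/-- Flat norm of a functional `F` on `Lip₀(Ω)`; `L = 2` gives `‖·‖_{flat,α}` (α = 1/2),
`L = 1` gives `‖·‖_flat`. -/
def flatNorm (Ω : Set R2) (L : ℝ≥0) (F : (R2 → ℝ) → ℝ) : ℝ≥0∞ :=
  flatNormOn Ω (frontier Ω) L F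

/-- `d̄_Ω(x,y) = min{|x−y|, dist(x,∂Ω) + dist(y,∂Ω)}`. -/
def dbar (Ω : Set R2) (x y : R2) : ℝ :=
  min (dist x y) (Metric.infDist x (frontier Ω) + Metric.infDist y (frontier Ω))

/-- Countably subadditive interior envelope `𝒜**(u,V)` (relative to `Ω`). -/
def envA (u : R2 → R2) (Ω V : Set R2) : ℝ≥0∞ :=
  sInf { a : ℝ≥0∞ | ∃ A : ℕ → Set R2,
    (∀ k, IsOpen (A k) ∧ A k ⊆ Ω) ∧ V ⊆ ⋃ k, A k ∧ a = ∑' k, relaxedArea u (A k) }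

/-- Property `(P_f)` for a finite family of pairs of points of `cl(Ω)`. -/
def SatisfiesPf (Ω : Set R2) {n : ℕ} (x y : Fin n → R2) : Prop :=
  (∀ k, (x k ∈ Ω ∧ y k ∈ frontier Ω ∧ dist (x k) (y k) = Metric.infDist (x k) (frontier Ω)) ∨
        (y k ∈ Ω ∧ x k ∈ frontier Ω ∧ dist (x k) (y k) = Metric.infDist (y k) (frontier Ω))) ∧
  ∀ i j, x i ∈ Ω → y j ∈ Ω → x i ≠ y j

/-- The points of the family `x, y` lying in `Ω` are distinct and three by three
not collinear. -/
def InteriorPointsGeneric (Ω : Set R2) {n : ℕ} (x y : Fin n → R2) : Prop :=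
  (∀ a b : Fin n ⊕ Fin n, Sum.elim x y a ∈ Ω → Sum.elim x y b ∈ Ω → a ≠ b →
    Sum.elim x y a ≠ Sum.elim x y b) ∧
  ∀ a b c : Fin n ⊕ Fin n, Sum.elim x y a ∈ Ω → Sum.elim x y b ∈ Ω → Sum.elim x y c ∈ Ω →
    a ≠ b → a ≠ c → b ≠ c →
    ¬ Collinear ℝ ({Sum.elim x y a, Sum.elim x y b, Sum.elim x y c} : Set R2)

/-- `ι(w₁,w₂) = (w₁,−w₂)`. -/
def conjPt (w : R2) : R2 := (WithLp.equiv 2 (Fin 2 → ℝ)).symm ![w 0, -(w 1)]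

/-- `u` is a (positive/negative) vortex around the points of the family lying in `Ω`:
the closed discs of radii `ρ` are contained in `Ω` and pairwise disjoint,
`u(z) = (z−x_i)/|z−x_i|` on `B_{ρ}(x_i)` and `u(z) = ι((z−y_j)/|z−y_j|)` on `B_{ρ}(y_j)`. -/
def VortexAt (Ω : Set R2) (u : R2 → R2) {n : ℕ} (x y : Fin n → R2)
    (ρ : Fin n ⊕ Fin n → ℝ) : Prop :=
  (∀ a, Sum.elim x y a ∈ Ω → Metric.closedBall (Sum.elim x y a) (ρ a) ⊆ Ω) ∧
  (∀ a b, a ≠ b → Sum.elim x y a ∈ Ω → Sum.elim x y b ∈ Ω →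
    Disjoint (Metric.closedBall (Sum.elim x y a) (ρ a))
      (Metric.closedBall (Sum.elim x y b) (ρ b))) ∧
  (∀ i, x i ∈ Ω → ∀ᵐ z ∂(volume.restrict (Metric.ball (x i) (ρ (Sum.inl i)))),
    u z = ‖z - x i‖⁻¹ • (z - x i)) ∧
  (∀ i, y i ∈ Ω → ∀ᵐ z ∂(volume.restrict (Metric.ball (y i) (ρ (Sum.inr i)))),
    u z = conjPt (‖z - y i‖⁻¹ • (z - y i)))

/-- The energy `E(I_P, I_D, τ)` of a partition `{I_Dᶜ, I_D}` of `I` and an injection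
`τ : I_D → I`. -/
def energy (Ω : Set R2) {n : ℕ} (x y : Fin n → R2) (ID : Finset (Fin n))
    (τ : Fin n → Fin n) : ℝ≥0∞ :=
  ((IDᶜ.filter fun k => x k ∈ Ω).card : ℝ≥0∞) +
  (((Finset.univ \ ID.image τ).filter fun j => y j ∈ Ω).card : ℝ≥0∞) +
  2 * ∑ k ∈ ID, μH[1] (segment ℝ (y (τ k)) (x k) ∩ Ω)

/-- Weight of the walk from `k` to `e` through the list `l`. -/
def walkW {n : ℕ} (w : Fin n → Fin n → ℝ) (e : Fin n) : Fin n → List (Fin n) → ℝ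
  | k, [] => w k e
  | k, a :: l => w k a + walkW w e a l

lemma walkW_append {n : ℕ} (w : Fin n → Fin n → ℝ) (e a : Fin n) (l₂ : List (Fin n)) :
    ∀ (l₁ : List (Fin n)) (k : Fin n),
      walkW w e k (l₁ ++ a :: l₂) = walkW w a k l₁ + walkW w e a l₂
  | [], k => by simp [walkW]
  | b :: l₁, k => by
      simp only [List.cons_append, walkW]
      rw [walkW_append w e a l₂ l₁ b]; ring

lemma walkW_swap {n : ℕ} (w : Fin n → Fin n → ℝ) (k a : Fin n) :
    ∀ (l : List (Fin n)) (b : Fin n), k ∉ l → a ∉ l →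
      walkW (fun i j => w i (Equiv.swap k a j)) a b l = walkW w k b l
  | [], b => by simp [walkW]
  | c :: l, b => by
      intro h1 h2
      simp only [List.mem_cons, not_or] at h1 h2
      simp only [walkW]
      rw [walkW_swap w k a l c h1.2 h2.2,
        Equiv.swap_apply_of_ne_of_ne (Ne.symm h1.1) (Ne.symm h2.1)]

lemma exists_perm_walk {n : ℕ} : ∀ (l : List (Fin n)) (k : Fin n) (w : Fin n → Fin n → ℝ),
    (k :: l).Nodup → ∃ σ : Equiv.Perm (Fin n),
      ∑ i, w i (σ i) = walkW w k k l + ∑ i, if i ∈ k :: l then 0 else w i i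
  | [], k, w => by
      intro _
      refine ⟨1, ?_⟩
      have : ∀ i, w i i = (if i = k then w k k else 0) + (if i ∈ [k] then 0 else w i i) := by
        intro i; by_cases h : i = k <;> simp [h]
      simp only [Equiv.Perm.coe_one, id, walkW]
      rw [Finset.sum_congr rfl (fun i _ => this i), Finset.sum_add_distrib]
      simp
  | a :: l, k, w => by
      intro h
      obtain ⟨σ, hσ⟩ := exists_perm_walk l a (fun i j => w i (Equiv.swap k a j))
        (List.nodup_cons.1 h).2
      refine ⟨σ.trans (Equiv.swap k a), ?_⟩
      simp only [List.nodup_cons, List.mem_cons, not_or] at h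
      simp only [Equiv.trans_apply]
      rw [hσ, walkW_swap w k a l a h.1.2 h.2.1]
      have : ∀ i, (if i ∈ a :: l then 0 else w i (Equiv.swap k a i)) =
          (if i = k then w k a else 0) + (if i ∈ k :: a :: l then 0 else w i i) := by
        intro i
        by_cases h1 : i = k
        · subst h1; simp [h.1.1, h.1.2]
        · by_cases h2 : i ∈ a :: l
          · have : i ∈ k :: a :: l := List.mem_cons_of_mem _ h2
            simp only [h1, h2, this, if_true, if_false]; simp
          · have h3 : i ∉ k :: a :: l := by
              simp only [List.mem_cons, not_or] at h2 ⊢; exact ⟨h1, h2⟩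
            have h4 : i ≠ a := by
              rintro rfl; exact h2 List.mem_cons_self
            rw [if_neg h2, if_neg h3, if_neg h1, Equiv.swap_apply_of_ne_of_ne h1 h4]; simp
      rw [Finset.sum_congr rfl (fun i _ => this i), Finset.sum_add_distrib]
      simp only [walkW, Finset.sum_ite_eq', Finset.mem_univ, if_true]
      ring

lemma closed_walk_nonneg {n : ℕ} (w : Fin n → Fin n → ℝ) (hw0 : ∀ i, w i i = 0)
    (hw : ∀ σ : Equiv.Perm (Fin n), 0 ≤ ∑ i, w i (σ i)) :
    ∀ (m : ℕ) (l : List (Fin n)) (k : Fin n), l.length = m → 0 ≤ walkW w k k l := by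
  intro m
  induction m using Nat.strong_induction_on with
  | _ m ih =>
    intro l k hl
    by_cases hnd : (k :: l).Nodup
    · obtain ⟨σ, hσ⟩ := exists_perm_walk l k w hnd
      have h := hw σ
      simp only [hσ, hw0, ite_self, Finset.sum_const_zero, add_zero] at h
      exact h
    · by_cases hk : k ∈ l
      · obtain ⟨l₁, l₂, rfl⟩ := List.append_of_mem hk
        rw [walkW_append]
        simp only [List.length_append, List.length_cons] at hl
        exact add_nonneg (ih _ (by omega) l₁ k rfl) (ih _ (by omega) l₂ k rfl)
      · have hl2 : ¬ l.Nodup := fun h => hnd (List.nodup_cons.2 ⟨hk, h⟩)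
        obtain ⟨a, ha⟩ := List.exists_duplicate_iff_not_nodup.2 hl2
        have hsub := List.duplicate_iff_sublist.1 ha
        have : ∃ l₁ l₂ l₃, l = l₁ ++ a :: (l₂ ++ a :: l₃) := by
          clear hsub hl2 hk hnd hl ih
          induction ha with
          | cons_mem h =>
            obtain ⟨s, t, rfl⟩ := List.append_of_mem h
            exact ⟨[], s, t, rfl⟩
          | cons_duplicate h ih =>
            obtain ⟨l₁, l₂, l₃, rfl⟩ := ih
            exact ⟨_ :: l₁, l₂, l₃, rfl⟩
        obtain ⟨l₁, l₂, l₃, rfl⟩ := this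
        rw [walkW_append, walkW_append]
        simp only [List.length_append, List.length_cons] at hl
        have h1 := ih _ (by simp only [List.length_append, List.length_cons]; omega)
          (l₁ ++ a :: l₃) k rfl
        rw [walkW_append] at h1
        have h2 := ih _ (by omega) l₂ a rfl
        linarith

lemma exists_potential {n : ℕ} (w : Fin n → Fin n → ℝ) (hw0 : ∀ i, w i i = 0)
    (hw : ∀ σ : Equiv.Perm (Fin n), 0 ≤ ∑ i, w i (σ i)) (e : Fin n) :
    ∃ v : Fin n → ℝ, ∀ k j, v k - v j ≤ w k j := by
  have hb : ∀ k, BddBelow (Set.range (walkW w e k)) := by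
    intro k
    refine ⟨- w e k, ?_⟩
    rintro _ ⟨l, rfl⟩
    have := closed_walk_nonneg w hw0 hw _ (k :: l) e rfl
    simp only [walkW] at this
    linarith
  refine ⟨fun k => ⨅ l, walkW w e k l, fun k j => ?_⟩
  have : (⨅ l, walkW w e k l) - w k j ≤ ⨅ l, walkW w e j l := by
    apply le_ciInf
    intro l
    have := ciInf_le (hb k) (j :: l)
    simp only [walkW] at this
    linarith
  show (⨅ l, walkW w e k l) - (⨅ l, walkW w e j l) ≤ w k j
  linarith

/-- Kantorovich duality for an optimal assignment with a (pseudo)metric cost. -/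
lemma kantorovich {V : Type*} {n : ℕ} (D : V → V → ℝ)
    (htri : ∀ p q r, D p r ≤ D p q + D q r) (hzero : ∀ p, D p p = 0)
    (a b : Fin n → V) (e : Fin n)
    (hopt : ∀ σ : Equiv.Perm (Fin n), ∑ k, D (a k) (b k) ≤ ∑ k, D (a k) (b (σ k))) :
    ∃ φ : V → ℝ, (∀ p q, φ p - φ q ≤ D p q) ∧ ∀ k, D (a k) (b k) ≤ φ (a k) - φ (b k) := by
  obtain ⟨v, hv⟩ := exists_potential (fun k j => D (a k) (b j) - D (a k) (b k))
    (fun i => sub_self _) (fun σ => by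
      rw [Finset.sum_sub_distrib]; linarith [hopt σ]) e
  haveI : Nonempty (Fin n) := ⟨e⟩
  have hb : ∀ z, BddBelow (Set.range fun j => v j + D z (b j)) := fun z =>
    (Set.finite_range _).bddBelow
  let ψ : V → ℝ := fun z => ⨅ j, (v j + D z (b j))
  have hψ : ∀ p q, ψ p - ψ q ≤ D p q := by
    intro p q
    have : ψ p - D p q ≤ ψ q := by
      apply le_ciInf
      intro j
      have := ciInf_le (hb p) j
      have h2 := htri p q (b j)
      simp only [ψ]
      linarith
    linarith
  have h2 : ∀ k, v k + D (a k) (b k) ≤ ψ (a k) := by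
    intro k
    apply le_ciInf
    intro j
    have := hv k j
    linarith
  refine ⟨ψ, hψ, fun k => ?_⟩
  have h3 : ψ (b k) ≤ v k := by
    have := ciInf_le (hb (b k)) k
    simp only [hzero, add_zero] at this
    exact this
  linarith [h2 k]

/-- Truncated distance to the boundary. -/
def bdd (Ω : Set R2) (p : R2) : ℝ := min 1 (2 * Metric.infDist p (frontier Ω))

/-- The truncated pseudo-distance. -/
def Dd (Ω : Set R2) (p q : R2) : ℝ := min (2 * dist p q) (bdd Ω p + bdd Ω q)

lemma bdd_nonneg (Ω : Set R2) (p : R2) : 0 ≤ bdd Ω p :=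
  le_min zero_le_one (mul_nonneg zero_le_two Metric.infDist_nonneg)

lemma bdd_le (Ω : Set R2) (p q : R2) : bdd Ω p ≤ bdd Ω q + 2 * dist p q := by
  have h := Metric.infDist_le_infDist_add_dist (s := frontier Ω) (x := p) (y := q)
  have hd : 0 ≤ dist p q := dist_nonneg
  unfold bdd
  rcases min_cases 1 (2 * Metric.infDist q (frontier Ω)) with h1 | h1
  · linarith [min_le_left 1 (2 * Metric.infDist p (frontier Ω))]
  · linarith [min_le_right 1 (2 * Metric.infDist p (frontier Ω))]

lemma bdd_frontier {Ω : Set R2} {p : R2} (hp : p ∈ frontier Ω) : bdd Ω p = 0 := by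
  simp [bdd, Metric.infDist_zero_of_mem hp]

lemma Dd_tri (Ω : Set R2) (p q r : R2) : Dd Ω p r ≤ Dd Ω p q + Dd Ω q r := by
  have h1 := bdd_le Ω p q
  have h2 := bdd_le Ω r q
  have h3 := dist_triangle p q r
  have h4 := bdd_nonneg Ω q
  rw [dist_comm r q] at h2
  have a1 := min_le_left (2 * dist p r) (bdd Ω p + bdd Ω r)
  have a2 := min_le_right (2 * dist p r) (bdd Ω p + bdd Ω r)
  unfold Dd
  rcases min_cases (2 * dist p q) (bdd Ω p + bdd Ω q) with h | h <;>
  rcases min_cases (2 * dist q r) (bdd Ω q + bdd Ω r) with h' | h' <;> linarith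

lemma Dd_self (Ω : Set R2) (p : R2) : Dd Ω p p = 0 := by
  have := bdd_nonneg Ω p
  simp [Dd, this]

set_option maxHeartbeats 1000000 in
/-- From a permutation one gets a competitor for the energy. -/
lemma exists_competitor (Ω : Set R2) (hΩo : IsOpen Ω) {n : ℕ} (x y : Fin n → R2)
    (hPf : SatisfiesPf Ω x y) (σ : Equiv.Perm (Fin n)) :
    ∃ (ID : Finset (Fin n)) (τ : Fin n → Fin n), Set.InjOn τ ↑ID ∧
      energy Ω x y ID τ ≤ ENNReal.ofReal (∑ k, Dd Ω (x k) (y (σ k))) := by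
  have hfr : ∀ p, p ∈ frontier Ω → p ∉ Ω := by
    intro p hp
    rw [hΩo.frontier_eq] at hp
    exact hp.2
  have hP : ∀ k, x k ∈ Ω → y k ∈ frontier Ω ∧ y k ∉ Ω ∧
      dist (x k) (y k) = Metric.infDist (x k) (frontier Ω) := by
    intro k hk
    rcases hPf.1 k with h | h
    · exact ⟨h.2.1, hfr _ h.2.1, h.2.2⟩
    · exact absurd hk (hfr _ h.2.1)
  have hN : ∀ k, x k ∉ Ω → x k ∈ frontier Ω ∧ y k ∈ Ω ∧
      dist (x k) (y k) = Metric.infDist (y k) (frontier Ω) := by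
    intro k hk
    rcases hPf.1 k with h | h
    · exact absurd h.1 hk
    · exact ⟨h.2.1, h.1, h.2.2⟩
  have hsum : ∀ k, bdd Ω (x k) + bdd Ω (y k) = min 1 (2 * dist (x k) (y k)) := by
    intro k
    by_cases hk : x k ∈ Ω
    · rw [bdd_frontier (hP k hk).1, (hP k hk).2.2, bdd, add_zero]
    · rw [bdd_frontier (hN k hk).1, (hN k hk).2.2, bdd, zero_add]
  let A : Fin n → Prop := fun k => x k ∈ Ω ∧ x (σ k) ∉ Ω ∧
    2 * dist (x k) (y (σ k)) ≤ bdd Ω (x k) + bdd Ω (y (σ k))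
  have hD : ∀ k, Dd Ω (x k) (y (σ k)) =
      (if A k then 2 * dist (x k) (y (σ k)) else bdd Ω (x k)) +
        (if A k then 0 else bdd Ω (y (σ k))) := by
    intro k
    by_cases hA : A k
    · rw [if_pos hA, if_pos hA, add_zero, Dd, min_eq_left hA.2.2]
    · rw [if_neg hA, if_neg hA, Dd, min_eq_right]
      by_cases h1 : x k ∈ Ω
      · by_cases h2 : x (σ k) ∈ Ω
        · have := bdd_frontier (hP _ h2).1
          have h3 := bdd_le Ω (x k) (y (σ k))
          linarith
        · by_contra h3
          exact hA ⟨h1, h2, (not_le.1 h3).le⟩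
      · have := bdd_frontier (hN _ h1).1
        have h3 := bdd_le Ω (y (σ k)) (x k)
        rw [dist_comm] at h3
        linarith
  let B : Fin n → Prop := fun k => A (σ.symm k)
  have hBP : ∀ k, B k → x k ∉ Ω := by
    intro k hk
    have := hk.2.1
    simpa using this
  have hDs : ∑ k, Dd Ω (x k) (y (σ k)) =
      ∑ k, ((if A k then 2 * dist (x k) (y (σ k)) else bdd Ω (x k)) +
        (if B k then 0 else bdd Ω (y k))) := by
    rw [Finset.sum_congr rfl (fun k _ => hD k), Finset.sum_add_distrib, Finset.sum_add_distrib]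
    congr 1
    rw [← Equiv.sum_comp σ (fun k => if B k then 0 else bdd Ω (y k))]
    simp [B]
  let ID : Finset (Fin n) := Finset.univ.filter fun k =>
    A k ∨ (¬ A k ∧ ¬ B k ∧ 2 * dist (x k) (y k) ≤ 1)
  let τ : Fin n → Fin n := fun k => if A k then σ k else k
  have hID : ∀ k, k ∈ ID ↔ A k ∨ (¬ A k ∧ ¬ B k ∧ 2 * dist (x k) (y k) ≤ 1) := by
    intro k; simp [ID]
  have hτA : ∀ k, A k → τ k = σ k := fun k h => if_pos h
  have hτN : ∀ k, ¬ A k → τ k = k := fun k h => if_neg h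
  have hBσ : ∀ k, A k → B (σ k) := by
    intro k hk
    show A (σ.symm (σ k))
    simpa using hk
  refine ⟨ID, τ, ?_, ?_⟩
  · intro i hi j hj hij
    rw [Finset.mem_coe, hID] at hi hj
    by_cases hAi : A i <;> by_cases hAj : A j
    · rw [hτA i hAi, hτA j hAj] at hij
      exact σ.injective hij
    · rw [hτA i hAi, hτN j hAj] at hij
      have := hBσ i hAi
      rw [hij] at this
      rcases hj with h | h
      · exact absurd h hAj
      · exact absurd this h.2.1
    · rw [hτN i hAi, hτA j hAj] at hij
      have := hBσ j hAj
      rw [← hij] at this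
      rcases hi with h | h
      · exact absurd h hAi
      · exact absurd this h.2.1
    · rwa [hτN i hAi, hτN j hAj] at hij
  · have hreal : ((IDᶜ.filter fun k => x k ∈ Ω).card : ℝ) +
        (((Finset.univ \ ID.image τ).filter fun j => y j ∈ Ω).card : ℝ) +
        2 * ∑ k ∈ ID, dist (x k) (y (τ k)) ≤ ∑ k, Dd Ω (x k) (y (σ k)) := by
      have e1 : ((IDᶜ.filter fun k => x k ∈ Ω).card : ℝ) =
          ∑ k, if k ∉ ID ∧ x k ∈ Ω then (1 : ℝ) else 0 := by
        rw [Finset.sum_boole]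
        congr 2
        ext k; simp
      have e2 : (((Finset.univ \ ID.image τ).filter fun j => y j ∈ Ω).card : ℝ) =
          ∑ k, if k ∉ ID.image τ ∧ y k ∈ Ω then (1 : ℝ) else 0 := by
        rw [Finset.sum_boole]
        congr 2
        ext k; simp
      have e3 : 2 * ∑ k ∈ ID, dist (x k) (y (τ k)) =
          ∑ k, if k ∈ ID then 2 * dist (x k) (y (τ k)) else 0 := by
        rw [Finset.mul_sum, Finset.sum_ite_mem, Finset.univ_inter]
      rw [e1, e2, e3, hDs, ← Finset.sum_add_distrib, ← Finset.sum_add_distrib]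
      apply Finset.sum_le_sum
      intro k _
      have b1 := bdd_nonneg Ω (x k)
      have b2 := bdd_nonneg Ω (y k)
      by_cases hA : A k
      · have hm : k ∈ ID := (hID k).2 (Or.inl hA)
        have hy : y k ∉ Ω := (hP k hA.1).2.1
        rw [if_pos hA, if_pos hm, if_neg (fun h => h.1 hm), if_neg (fun h => hy h.2), hτA k hA]
        split_ifs <;> linarith
      · by_cases hB : B k
        · have hm : k ∉ ID := fun h => by
            rcases (hID k).1 h with h | h
            · exact hA h
            · exact h.2.1 hB
          have hx := hBP k hB
          have hi : k ∈ ID.image τ := by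
            rw [Finset.mem_image]
            refine ⟨σ.symm k, (hID _).2 (Or.inl hB), ?_⟩
            rw [hτA _ hB]; simp
          rw [if_neg hA, if_pos hB, if_neg hm, if_neg (fun h => hx h.2), if_neg (fun h => h.1 hi)]
          linarith
        · rw [if_neg hA, if_neg hB, hsum k]
          by_cases hd : 2 * dist (x k) (y k) ≤ 1
          · have hm : k ∈ ID := (hID k).2 (Or.inr ⟨hA, hB, hd⟩)
            have hi : k ∈ ID.image τ := by
              rw [Finset.mem_image]
              exact ⟨k, hm, hτN k hA⟩
            rw [if_pos hm, if_neg (fun h => h.1 hm), if_neg (fun h => h.1 hi), hτN k hA, min_eq_right hd]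
            linarith
          · have hm : k ∉ ID := fun h => by
              rcases (hID k).1 h with h | h
              · exact hA h
              · exact hd h.2.2
            rw [if_neg hm, min_eq_left (not_le.1 hd).le]
            by_cases hx : x k ∈ Ω
            · have hy := (hP k hx).2.1
              rw [if_neg (fun h : k ∉ ID.image τ ∧ y k ∈ Ω => hy h.2)]
              split_ifs <;> norm_num
            · rw [if_neg (fun h : k ∉ ID ∧ x k ∈ Ω => hx h.2)]
              split_ifs <;> norm_num
    refine le_trans ?_ (ENNReal.ofReal_le_ofReal hreal)
    have hs : 0 ≤ ∑ k ∈ ID, dist (x k) (y (τ k)) := Finset.sum_nonneg fun _ _ => dist_nonneg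
    rw [ENNReal.ofReal_add (by positivity) (by positivity),
      ENNReal.ofReal_add (by positivity) (by positivity), ENNReal.ofReal_natCast,
      ENNReal.ofReal_natCast, ENNReal.ofReal_mul (by norm_num),
      ENNReal.ofReal_sum_of_nonneg (fun _ _ => dist_nonneg), ENNReal.ofReal_ofNat]
    unfold energy
    gcongr with k hk
    refine (measure_mono Set.inter_subset_left).trans ?_
    rw [hausdorffMeasure_segment, edist_comm, edist_dist]

/-- Termwise weak duality. -/
lemma weak_duality (Ω : Set R2) (hΩo : IsOpen Ω) {n : ℕ} (x y : Fin n → R2)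
    (hPf : SatisfiesPf Ω x y) (ID : Finset (Fin n)) (τ : Fin n → Fin n)
    (hinj : Set.InjOn τ ↑ID) (φ : R2 → ℝ) (hφ : FlatAdmissible Ω (frontier Ω) 2 φ) :
    ∑ k, (φ (x k) - φ (y k)) =
      (((IDᶜ.filter fun k => x k ∈ Ω).card : ℝ) +
        (((Finset.univ \ ID.image τ).filter fun j => y j ∈ Ω).card : ℝ) +
        2 * ∑ k ∈ ID, dist (x k) (y (τ k))) -
      (∑ k ∈ IDᶜ.filter (fun k => x k ∈ Ω), (1 - φ (x k)) +
        ∑ j ∈ (Finset.univ \ ID.image τ).filter (fun j => y j ∈ Ω), (1 + φ (y j)) +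
        ∑ k ∈ ID, (2 * dist (x k) (y (τ k)) - (φ (x k) - φ (y (τ k))))) ∧
    (∀ k, x k ∈ Ω → 0 ≤ 1 - φ (x k)) ∧ (∀ k, y k ∈ Ω → 0 ≤ 1 + φ (y k)) ∧
    (∀ k j, 0 ≤ 2 * dist (x k) (y j) - (φ (x k) - φ (y j))) := by
  have hx0 : ∀ k, x k ∉ Ω → φ (x k) = 0 := by
    intro k hk
    rcases hPf.1 k with h | h
    · exact absurd h.1 hk
    · exact hφ.2.1 _ h.2.1
  have hy0 : ∀ k, y k ∉ Ω → φ (y k) = 0 := by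
    intro k hk
    rcases hPf.1 k with h | h
    · exact hφ.2.1 _ h.2.1
    · exact absurd h.1 hk
  have hxc : ∀ k, x k ∈ closure Ω := by
    intro k
    rcases hPf.1 k with h | h
    · exact subset_closure h.1
    · exact frontier_subset_closure h.2.1
  have hyc : ∀ k, y k ∈ closure Ω := by
    intro k
    rcases hPf.1 k with h | h
    · exact frontier_subset_closure h.2.1
    · exact subset_closure h.1
  refine ⟨?_, ?_, ?_, ?_⟩
  · have s1 : ∑ k, φ (x k) = ∑ k ∈ ID, φ (x k) +
        ∑ k ∈ IDᶜ.filter (fun k => x k ∈ Ω), φ (x k) := by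
      rw [Finset.sum_filter_of_ne (fun k _ h => by by_contra h'; exact h (hx0 k h')),
        Finset.sum_add_sum_compl]
    have s2 : ∑ k, φ (y k) = ∑ k ∈ ID, φ (y (τ k)) +
        ∑ k ∈ (Finset.univ \ ID.image τ).filter (fun k => y k ∈ Ω), φ (y k) := by
      rw [Finset.sum_filter_of_ne (fun k _ h => by by_contra h'; exact h (hy0 k h')),
        ← Finset.sum_image (f := fun k => φ (y k)) hinj, add_comm,
        Finset.sum_sdiff (Finset.subset_univ _)]
    simp only [Finset.sum_sub_distrib, Finset.sum_add_distrib, s1, s2, Finset.sum_const,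
      nsmul_eq_mul, mul_one, ← Finset.mul_sum]
    ring
  · intro k _
    linarith [(abs_le.1 (hφ.2.2 _ (hxc k))).2]
  · intro k _
    linarith [(abs_le.1 (hφ.2.2 _ (hyc k))).1]
  · intro k j
    have := hφ.1.dist_le_mul _ (hxc k) _ (hyc j)
    rw [Real.dist_eq] at this
    have h2 := le_abs_self (φ (x k) - φ (y j))
    simp only [NNReal.coe_ofNat] at this
    linarith

/-- An optimal test function for the assignment problem. -/
lemma exists_optimal (Ω : Set R2) {n : ℕ} (x y : Fin n → R2)
    (hPf : SatisfiesPf Ω x y) :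
    ∃ φ : R2 → ℝ, FlatAdmissible Ω (frontier Ω) 2 φ ∧ ∃ σ : Equiv.Perm (Fin n),
      ∑ k, Dd Ω (x k) (y (σ k)) ≤ ∑ k, (φ (x k) - φ (y k)) := by
  rcases Nat.eq_zero_or_pos n with rfl | hn
  · refine ⟨fun _ => 0, ⟨LipschitzOnWith.of_dist_le_mul (fun p _ q _ => by simp),
      by simp, by simp⟩, 1, by simp⟩
  let e : Fin n := ⟨0, hn⟩
  obtain ⟨σ, hσ⟩ := Finite.exists_min (fun σ : Equiv.Perm (Fin n) =>
    ∑ k, Dd Ω (x k) (y (σ k)))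
  obtain ⟨ψ, hψ, hψ2⟩ := kantorovich (Dd Ω) (Dd_tri Ω) (Dd_self Ω) x (fun k => y (σ k)) e
    (fun ρ => hσ (ρ.trans σ))
  obtain ⟨b, hb⟩ : (frontier Ω).Nonempty := by
    rcases hPf.1 e with h | h
    · exact ⟨_, h.2.1⟩
    · exact ⟨_, h.2.1⟩
  have hbd := bdd_frontier hb
  have hle : ∀ p, |ψ p - ψ b| ≤ bdd Ω p := by
    intro p
    rw [abs_le]
    have h1 := hψ p b
    have h2 := hψ b p
    have h3 := min_le_right (2 * dist p b) (bdd Ω p + bdd Ω b)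
    have h4 := min_le_right (2 * dist b p) (bdd Ω b + bdd Ω p)
    unfold Dd at h1 h2
    constructor <;> linarith
  refine ⟨fun p => ψ p - ψ b, ⟨?_, ?_, ?_⟩, σ, ?_⟩
  · apply LipschitzOnWith.of_dist_le_mul
    intro p _ q _
    rw [Real.dist_eq, abs_le]
    have h1 := hψ p q
    have h2 := hψ q p
    have h3 := min_le_left (2 * dist p q) (bdd Ω p + bdd Ω q)
    have h4 := min_le_left (2 * dist q p) (bdd Ω q + bdd Ω p)
    unfold Dd at h1 h2
    rw [dist_comm q p] at h2 h4
    simp only [NNReal.coe_ofNat]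
    constructor <;> linarith
  · intro p hp
    have := hle p
    rw [bdd_frontier hp] at this
    exact abs_nonpos_iff.1 this
  · intro p _
    exact (hle p).trans (min_le_left _ _)
  · refine (Finset.sum_le_sum fun k _ => hψ2 k).trans (le_of_eq ?_)
    simp only [sub_sub_sub_cancel_right, Finset.sum_sub_distrib]
    rw [Equiv.sum_comp σ (fun k => ψ (y k))]

/-- **Proposition (optimal test function; Appendix).** Given a minimizer
`(I_Dᶜ, I_D, τ)` of the energy as in the structure lemma, there is
`φ ∈ Lip₀(Ω)` with `‖φ‖_∞ ≤ 1`, `lip(φ) ≤ 2`, such that `T(φ) = E(I_P,I_D,τ)`, with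
`φ = 1` at the uncoupled positive interior points, `φ = −1` at the uncoupled negative
interior points and `φ(x_k) − φ(y_{τ(k)}) = 2|x_k − y_{τ(k)}|` on dipoles; in particular
the minimum of the energy equals the maximum defining the flat norm. -/
theorem minimal_lipschitz_function (Ω : Set R2) (hΩo : IsOpen Ω)
    (hΩb : Bornology.IsBounded Ω) (hΩc : IsConnected Ω) (hΩl : HasLipschitzBoundary Ω)
    (n : ℕ) (x y : Fin n → R2) (hPf : SatisfiesPf Ω x y)
    (ID : Finset (Fin n)) (τ : Fin n → Fin n) (hinj : Set.InjOn τ ↑ID)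
    (hmin : ∀ (ID' : Finset (Fin n)) (τ' : Fin n → Fin n), Set.InjOn τ' ↑ID' →
      energy Ω x y ID τ ≤ energy Ω x y ID' τ')
    (hseg : ∀ k ∈ ID, openSegment ℝ (y (τ k)) (x k) ⊆ Ω)
    (hlen : ∑ k ∈ ID, μH[1] (segment ℝ (y (τ k)) (x k) ∩ Ω) =
      ENNReal.ofReal (∑ k ∈ ID, dist (x k) (y (τ k))))
    (hfix : ∀ k ∈ ID, ((x k ∈ Ω ∧ y (τ k) ∈ frontier Ω) ∨ (x k ∈ frontier Ω ∧ y (τ k) ∈ Ω)) →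
      τ k = k) :
    (∃ φ : R2 → ℝ, FlatAdmissible Ω (frontier Ω) 2 φ ∧
      ENNReal.ofReal (∑ k, (φ (x k) - φ (y k))) = energy Ω x y ID τ ∧
      (∀ k ∈ IDᶜ, x k ∈ Ω → φ (x k) = 1) ∧
      (∀ j, j ∉ ID.image τ → y j ∈ Ω → φ (y j) = -1) ∧
      (∀ k ∈ ID, φ (x k) - φ (y (τ k)) = 2 * dist (x k) (y (τ k)))) ∧
    sInf {e : ℝ≥0∞ | ∃ (ID' : Finset (Fin n)) (τ' : Fin n → Fin n),
        Set.InjOn τ' ↑ID' ∧ e = energy Ω x y ID' τ'} =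
      ⨆ φ ∈ {φ : R2 → ℝ | FlatAdmissible Ω (frontier Ω) 2 φ},
        ENNReal.ofReal (∑ k, (φ (x k) - φ (y k))) := by
  have hE : energy Ω x y ID τ = ENNReal.ofReal (((IDᶜ.filter fun k => x k ∈ Ω).card : ℝ) +
        (((Finset.univ \ ID.image τ).filter fun j => y j ∈ Ω).card : ℝ) +
        2 * ∑ k ∈ ID, dist (x k) (y (τ k))) := by
    have hs : 0 ≤ ∑ k ∈ ID, dist (x k) (y (τ k)) := Finset.sum_nonneg fun _ _ => dist_nonneg
    rw [ENNReal.ofReal_add (by positivity) (by positivity),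
      ENNReal.ofReal_add (by positivity) (by positivity), ENNReal.ofReal_natCast,
      ENNReal.ofReal_natCast, ENNReal.ofReal_mul (by norm_num), ENNReal.ofReal_ofNat, ← hlen]
    rfl
  have hs0 : 0 ≤ ((IDᶜ.filter fun k => x k ∈ Ω).card : ℝ) +
        (((Finset.univ \ ID.image τ).filter fun j => y j ∈ Ω).card : ℝ) +
        2 * ∑ k ∈ ID, dist (x k) (y (τ k)) := by
    have hs : 0 ≤ ∑ k ∈ ID, dist (x k) (y (τ k)) := Finset.sum_nonneg fun _ _ => dist_nonneg
    positivity
  have hweak : ∀ φ : R2 → ℝ, FlatAdmissible Ω (frontier Ω) 2 φ →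
      ENNReal.ofReal (∑ k, (φ (x k) - φ (y k))) ≤ energy Ω x y ID τ := by
    intro φ hφ
    obtain ⟨h1, h2, h3, h4⟩ := weak_duality Ω hΩo x y hPf ID τ hinj φ hφ
    rw [hE]
    apply ENNReal.ofReal_le_ofReal
    rw [h1]
    have t1 := Finset.sum_nonneg (s := IDᶜ.filter (fun k => x k ∈ Ω))
      (fun k hk => h2 k (Finset.mem_filter.1 hk).2)
    have t2 := Finset.sum_nonneg (s := (Finset.univ \ ID.image τ).filter (fun k => y k ∈ Ω))
      (fun k hk => h3 k (Finset.mem_filter.1 hk).2)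
    have t3 := Finset.sum_nonneg (s := ID) (fun k _ => h4 k (τ k))
    linarith
  obtain ⟨φ, hφ, σ, hσ⟩ := exists_optimal Ω x y hPf
  obtain ⟨ID', τ', hinj', hE'⟩ := exists_competitor Ω hΩo x y hPf σ
  have hge : energy Ω x y ID τ ≤ ENNReal.ofReal (∑ k, (φ (x k) - φ (y k))) :=
    (hmin ID' τ' hinj').trans (hE'.trans (ENNReal.ofReal_le_ofReal hσ))
  have heq := le_antisymm (hweak φ hφ) hge
  constructor
  · refine ⟨φ, hφ, heq, ?_⟩
    obtain ⟨h1, h2, h3, h4⟩ := weak_duality Ω hΩo x y hPf ID τ hinj φ hφ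
    have t1' : ∀ k ∈ IDᶜ.filter (fun k => x k ∈ Ω), 0 ≤ 1 - φ (x k) :=
      fun k hk => h2 k (Finset.mem_filter.1 hk).2
    have t2' : ∀ k ∈ (Finset.univ \ ID.image τ).filter (fun k => y k ∈ Ω), 0 ≤ 1 + φ (y k) :=
      fun k hk => h3 k (Finset.mem_filter.1 hk).2
    have t3' : ∀ k ∈ ID, 0 ≤ 2 * dist (x k) (y (τ k)) - (φ (x k) - φ (y (τ k))) :=
      fun k _ => h4 k (τ k)
    have t1 := Finset.sum_nonneg t1'
    have t2 := Finset.sum_nonneg t2'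
    have t3 := Finset.sum_nonneg t3'
    have hT : 0 ≤ ∑ k, (φ (x k) - φ (y k)) :=
      (Finset.sum_nonneg fun k _ => (by
        unfold Dd
        have b1 := bdd_nonneg Ω (x k)
        have b2 := bdd_nonneg Ω (y (σ k))
        exact le_min (by positivity) (by positivity))).trans hσ
    rw [hE, ENNReal.ofReal_le_ofReal_iff hT, h1] at hge
    have z1 := (Finset.sum_eq_zero_iff_of_nonneg t1').1 (by linarith)
    have z2 := (Finset.sum_eq_zero_iff_of_nonneg t2').1 (by linarith)
    have z3 := (Finset.sum_eq_zero_iff_of_nonneg t3').1 (by linarith)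
    refine ⟨fun k hk hx => ?_, fun j hj hy => ?_, fun k hk => ?_⟩
    · have := z1 k (Finset.mem_filter.2 ⟨hk, hx⟩)
      linarith
    · have := z2 j (Finset.mem_filter.2
        ⟨Finset.mem_sdiff.2 ⟨Finset.mem_univ _, hj⟩, hy⟩)
      linarith
    · have := z3 k hk
      linarith
  · apply le_antisymm
    · refine le_trans (b := energy Ω x y ID τ) (sInf_le ⟨ID, τ, hinj, rfl⟩) ?_
      rw [← heq]
      exact le_iSup₂ (f := fun (φ : R2 → ℝ)
        (_ : φ ∈ {φ : R2 → ℝ | FlatAdmissible Ω (frontier Ω) 2 φ}) =>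
        ENNReal.ofReal (∑ k, (φ (x k) - φ (y k)))) φ hφ
    · refine iSup₂_le fun ψ hψ => (hweak ψ hψ).trans ?_
      refine le_sInf ?_
      rintro _ ⟨ID'', τ'', hi, rfl⟩
      exact hmin _ _ hi
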